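/- For every prime power q, the number of strong realizations of the hyperfiguration h_2 in P^3(F_q) and the number F(q) of strong realizations of the Fano plane in P^2(F_q) satisfy A_{h_2}(4,q) · |PGL_3(F_q)| = F(q) · |PGL_4(F_q)|. -/

import Mathlib

open scoped LinearAlgebra.Projectivization

/-- Three points of `ℙ³(F_q)` are collinear if vector representatives of them span a
subspace of `F_q^4` of dimension at most 2. -/
def Collinear3 (F : Type) [Field F] (x y z : ℙ F (Fin 4 → F)) : Prop :=
  Module.finrank F ↥(x.submodule ⊔ y.submodule ⊔ z.submodule) ≤ 2

/-- Four points of `ℙ³(F_q)` are coplanar if vector representatives of them span a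
subspace of `F_q^4` of dimension at most 3. -/
def Coplanar4 (F : Type) [Field F] (x y z w : ℙ F (Fin 4 → F)) : Prop :=
  Module.finrank F ↥(x.submodule ⊔ y.submodule ⊔ z.submodule ⊔ w.submodule) ≤ 3

/-- A strong realization in `ℙ³(F_q)` of a configuration on points `{0,…,6}` given by a
list of planes and a list of lines: an injective map `σ` such that a triple of image points
is collinear iff its index set is contained in a listed line, and four image points are
coplanar iff their index set is contained in a listed plane. -/
def IsConfigReal (F : Type) [Field F] (planes lines : Finset (Finset (Fin 7)))
    (σ : Fin 7 → ℙ F (Fin 4 → F)) : Prop :=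
  Function.Injective σ ∧
    (∀ a b c : Fin 7, a ≠ b → a ≠ c → b ≠ c →
      (Collinear3 F (σ a) (σ b) (σ c) ↔ ∃ l ∈ lines, ({a, b, c} : Finset (Fin 7)) ⊆ l)) ∧
    (∀ a b c d : Fin 7, a ≠ b → a ≠ c → a ≠ d → b ≠ c → b ≠ d → c ≠ d →
      (Coplanar4 F (σ a) (σ b) (σ c) (σ d) ↔
        ∃ h ∈ planes, ({a, b, c, d} : Finset (Fin 7)) ⊆ h))

/-- Planes of the hyperfiguration `h₂` (the complement of the Fano plane). -/
def h2planes : Finset (Finset (Fin 7)) :=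
  {{0, 1, 2, 3}, {0, 1, 4, 5}, {0, 2, 4, 6}, {0, 3, 5, 6}, {1, 2, 5, 6}, {1, 3, 4, 6},
    {2, 3, 4, 5}}

/-- Three points of `ℙ²(F_q)` are collinear if vector representatives of them span a
subspace of `F_q^3` of dimension at most 2. -/
def Collinear3P2 (F : Type) [Field F] (x y z : ℙ F (Fin 3 → F)) : Prop :=
  Module.finrank F ↥(x.submodule ⊔ y.submodule ⊔ z.submodule) ≤ 2

/-- Lines of the Fano plane on points `{0,…,6}`. -/
def fanoLines : Finset (Finset (Fin 7)) :=
  {{0, 1, 2}, {0, 3, 4}, {0, 5, 6}, {1, 3, 5}, {1, 4, 6}, {2, 3, 6}, {2, 4, 5}}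

/-- A strong realization of the Fano plane in `ℙ²(F_q)`: an injective
`τ : {0,…,6} → ℙ²(F_q)` such that a triple of image points is collinear iff its index set
is one of the seven Fano lines. `F(q)` is the number of such maps. -/
def IsFanoReal (F : Type) [Field F] (τ : Fin 7 → ℙ F (Fin 3 → F)) : Prop :=
  Function.Injective τ ∧
    ∀ a b c : Fin 7, a ≠ b → a ≠ c → b ≠ c →
      (Collinear3P2 F (τ a) (τ b) (τ c) ↔ ({a, b, c} : Finset (Fin 7)) ∈ fanoLines)

open Projectivization Matrix

lemma count_aux {F : Type} [Field F] [Fintype F] {n : ℕ} [NeZero n] (v : Fin 7 → Fin n → F)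
    (P : (Fin 7 → ℙ F (Fin n → F)) → Prop)
    (h0 : ∀ (g : GL (Fin n) F) (a : Fin 7), g.val *ᵥ v a ≠ 0)
    (h1 : ∀ g : GL (Fin n) F, P (fun a => mk F (g.val *ᵥ v a) (h0 g a)))
    (h2 : ∀ σ, P σ → ∃ g : GL (Fin n) F, ∀ a, σ a = mk F (g.val *ᵥ v a) (h0 g a))
    (h3 : ∀ g : Matrix (Fin n) (Fin n) F, (∀ a, ∃ c : F, g *ᵥ v a = c • v a) →
      ∃ c : F, g = c • (1 : Matrix (Fin n) (Fin n) F)) :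
    Nat.card {σ // P σ} * (Fintype.card F - 1) = Nat.card (GL (Fin n) F) := by
  classical
  choose s hs using fun σ : {σ // P σ} => h2 σ.1 σ.2
  rw [← Fintype.card_units, ← Nat.card_eq_fintype_card, ← Nat.card_prod]
  have key : ∀ (c : Fˣ) (g : GL (Fin n) F) (a), mk F ((c • g).val *ᵥ v a) (h0 _ a)
      = mk F (g.val *ᵥ v a) (h0 _ a) := by
    intro c g a
    rw [mk_eq_mk_iff]
    exact ⟨c, by rw [Units.val_smul, smul_mulVec]⟩
  refine Nat.card_congr (Equiv.ofBijective (fun p => p.2 • s p.1) ⟨?_, ?_⟩)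
  · rintro ⟨σ, c⟩ ⟨τ, d⟩ h
    have h' : c • s σ = d • s τ := h
    have e : σ = τ := by
      apply Subtype.ext
      funext a
      rw [hs σ a, hs τ a, ← key c (s σ) a, ← key d (s τ) a]
      congr 3
    subst e
    have h4 : c = d := by
      have h5 := congrArg (fun g : GL (Fin n) F => g.val * (s σ)⁻¹.val) h'
      have h6 : (c : F) • (1 : Matrix (Fin n) (Fin n) F) = (d : F) • 1 := by
        simpa [Units.val_smul, Units.smul_def, smul_mul_assoc] using h5
      have h7 := congrFun (congrFun h6 0) 0
      simp at h7
      exact Units.ext h7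
    rw [h4]
  · intro g
    let σ : {σ // P σ} := ⟨_, h1 g⟩
    have h4 : ∀ a, ∃ c : F, ((s σ)⁻¹.val * g.val) *ᵥ v a = c • v a := by
      intro a
      have h5 : mk F (g.val *ᵥ v a) (h0 g a) = mk F ((s σ).val *ᵥ v a) (h0 _ a) := hs σ a
      rw [mk_eq_mk_iff] at h5
      obtain ⟨c, hc⟩ := h5
      refine ⟨c, ?_⟩
      rw [← mulVec_mulVec, ← hc, Units.smul_def, mulVec_smul, mulVec_mulVec, ← Units.val_mul,
        inv_mul_cancel, Units.val_one, one_mulVec]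
    obtain ⟨c, hc⟩ := h3 _ h4
    have hc0 : c ≠ 0 := by
      rintro rfl
      rw [zero_smul, ← Units.val_mul] at hc
      exact ((s σ)⁻¹ * g).ne_zero hc
    refine ⟨(σ, Units.mk0 c hc0), ?_⟩
    apply Units.ext
    have h5 : (s σ).val * ((s σ)⁻¹.val * g.val) = (s σ).val * (c • 1) := by rw [hc]
    rw [← mul_assoc, ← Units.val_mul, mul_inv_cancel] at h5
    simp at h5
    simp [Units.val_smul, h5, Units.smul_def]

lemma finrank_lt_iff {F : Type} [Field F] {n : ℕ} (u : Fin (n+1) → Fin (n+1) → F) :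
    Module.finrank F (Submodule.span F (Set.range u)) ≤ n ↔ (Matrix.of u).det = 0 := by
  have h1 : LinearIndependent F u ↔ (Matrix.of u).det ≠ 0 := by
    rw [← isUnit_iff_ne_zero, ← Matrix.isUnit_iff_isUnit_det]
    exact Matrix.linearIndependent_rows_iff_isUnit (A := Matrix.of u)
  rw [linearIndependent_iff_card_le_finrank_span, Set.finrank, Fintype.card_fin] at h1
  rw [← not_iff_not, ← ne_eq, ← h1]; omega

lemma cop_iff {F : Type} [Field F] (x y z w : Fin 4 → F) (hx hy hz hw) :
    Coplanar4 F (mk F x hx) (mk F y hy) (mk F z hz) (mk F w hw) ↔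
      (Matrix.of ![x, y, z, w]).det = 0 := by
  have h1 : Set.range ![x, y, z, w] = {x} ∪ {y} ∪ {z} ∪ {w} := by
    ext t; simp [eq_comm]
  have h2 : (mk F x hx).submodule ⊔ (mk F y hy).submodule ⊔ (mk F z hz).submodule ⊔ (mk F w hw).submodule
      = Submodule.span F (Set.range ![x, y, z, w]) := by
    rw [h1]; simp only [submodule_mk, Submodule.span_union]
  rw [← finrank_lt_iff, Coplanar4, h2]

lemma col_iff {F : Type} [Field F] (x y z : Fin 3 → F) (hx hy hz) :
    Collinear3P2 F (mk F x hx) (mk F y hy) (mk F z hz) ↔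
      (Matrix.of ![x, y, z]).det = 0 := by
  have h1 : Set.range ![x, y, z] = {x} ∪ {y} ∪ {z} := by
    ext t; simp [eq_comm]
  have h2 : (mk F x hx).submodule ⊔ (mk F y hy).submodule ⊔ (mk F z hz).submodule
      = Submodule.span F (Set.range ![x, y, z]) := by
    rw [h1]; simp only [submodule_mk, Submodule.span_union]
  rw [← finrank_lt_iff, Collinear3P2, h2]

/-- Explicit 3 by 3 determinant. -/
def d3 {R : Type} [CommRing R] (x y z : Fin 3 → R) : R :=
  x 0 * (y 1 * z 2 - y 2 * z 1) - x 1 * (y 0 * z 2 - y 2 * z 0) + x 2 * (y 0 * z 1 - y 1 * z 0)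

/-- Explicit 4 by 4 determinant. -/
def d4 {R : Type} [CommRing R] (x y z w : Fin 4 → R) : R :=
  x 0 * (y 1 * (z 2 * w 3 - z 3 * w 2) - y 2 * (z 1 * w 3 - z 3 * w 1)
      + y 3 * (z 1 * w 2 - z 2 * w 1))
  - x 1 * (y 0 * (z 2 * w 3 - z 3 * w 2) - y 2 * (z 0 * w 3 - z 3 * w 0)
      + y 3 * (z 0 * w 2 - z 2 * w 0))
  + x 2 * (y 0 * (z 1 * w 3 - z 3 * w 1) - y 1 * (z 0 * w 3 - z 3 * w 0)
      + y 3 * (z 0 * w 1 - z 1 * w 0))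
  - x 3 * (y 0 * (z 1 * w 2 - z 2 * w 1) - y 1 * (z 0 * w 2 - z 2 * w 0)
      + y 2 * (z 0 * w 1 - z 1 * w 0))

lemma det_eq_d3 {R : Type} [CommRing R] (x y z : Fin 3 → R) :
    (Matrix.of ![x, y, z]).det = d3 x y z := by
  rw [Matrix.det_fin_three]; simp [d3]; ring

lemma det_eq_d4 {R : Type} [CommRing R] (x y z w : Fin 4 → R) :
    (Matrix.of ![x, y, z, w]).det = d4 x y z w := by
  rw [Matrix.det_succ_row_zero]
  simp [Fin.sum_univ_succ, Matrix.det_fin_three, d4, Fin.succAbove]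
  ring

lemma d3_mul {F : Type} [Field F] (g : Matrix (Fin 3) (Fin 3) F) (x y z : Fin 3 → F) :
    d3 (g *ᵥ x) (g *ᵥ y) (g *ᵥ z) = d3 x y z * g.det := by
  rw [← det_eq_d3, ← det_eq_d3, ← Matrix.det_transpose g, ← Matrix.det_mul]
  congr 1
  ext i j
  fin_cases i <;> simp [Matrix.mul_apply, mulVec, dotProduct, Fin.sum_univ_succ, mul_comm]

lemma d4_mul {F : Type} [Field F] (g : Matrix (Fin 4) (Fin 4) F) (x y z w : Fin 4 → F) :
    d4 (g *ᵥ x) (g *ᵥ y) (g *ᵥ z) (g *ᵥ w) = d4 x y z w * g.det := by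
  rw [← det_eq_d4, ← det_eq_d4, ← Matrix.det_transpose g, ← Matrix.det_mul]
  congr 1
  ext i j
  fin_cases i <;> simp [Matrix.mul_apply, mulVec, dotProduct, Fin.sum_univ_succ, mul_comm]

/-- Integral Fano vectors. -/
def vF : Fin 7 → Fin 3 → ℤ :=
  ![![1,0,0], ![0,1,0], ![1,1,0], ![0,0,1], ![1,0,1], ![0,1,1], ![1,1,1]]

/-- Integral dual Fano vectors. -/
def vH : Fin 7 → Fin 4 → ℤ :=
  ![![1,0,1,1], ![1,1,0,1], ![1,1,1,0], ![1,0,0,0], ![0,1,0,0], ![0,0,1,0], ![0,0,0,1]]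

lemma vF_dec : ∀ a b c : Fin 7, a ≠ b → a ≠ c → b ≠ c →
    ((2 : ℤ) ∣ d3 (vF a) (vF b) (vF c) ↔ ({a, b, c} : Finset (Fin 7)) ∈ fanoLines) := by
  decide +kernel

lemma vH_dec : ∀ a b c d : Fin 7, a ≠ b → a ≠ c → a ≠ d → b ≠ c → b ≠ d → c ≠ d →
    ((2 : ℤ) ∣ d4 (vH a) (vH b) (vH c) (vH d) ↔
      ∃ h ∈ h2planes, ({a, b, c, d} : Finset (Fin 7)) ⊆ h) := by
  decide +kernel

lemma ext_dec : ∀ a b c : Fin 7, a ≠ b → a ≠ c → b ≠ c →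
    ∃ d, a ≠ d ∧ b ≠ d ∧ c ≠ d ∧ ¬ ∃ h ∈ h2planes, ({a, b, c, d} : Finset (Fin 7)) ⊆ h := by
  decide +kernel

lemma ext2_dec : ∀ a b : Fin 7, a ≠ b →
    ∃ c, a ≠ c ∧ b ≠ c ∧ ¬ ({a, b, c} : Finset (Fin 7)) ∈ fanoLines := by
  decide +kernel

lemma ext3_dec : ∀ a b : Fin 7, a ≠ b → ∃ c, a ≠ c ∧ b ≠ c := by
  decide +kernel

lemma fano_iff {F : Type} [Field F] (w : Fin 7 → Fin 3 → F) (hw : ∀ a, w a ≠ 0) :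
    IsFanoReal F (fun a => mk F (w a) (hw a)) ↔ ∀ a b c : Fin 7, a ≠ b → a ≠ c → b ≠ c →
      (d3 (w a) (w b) (w c) = 0 ↔ ({a, b, c} : Finset (Fin 7)) ∈ fanoLines) := by
  simp only [IsFanoReal, col_iff, det_eq_d3]
  refine ⟨fun h => h.2, fun h => ⟨?_, h⟩⟩
  intro a b hab
  by_contra hne
  obtain ⟨c, h1, h2, h3⟩ := ext2_dec a b hne
  apply h3
  rw [← h a b c hne h1 h2, ← det_eq_d3,
    ← col_iff (w a) (w b) (w c) (hw a) (hw b) (hw c)]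
  dsimp only at hab
  rw [hab, Collinear3P2, sup_idem]
  refine (Submodule.finrank_add_le_finrank_add_finrank _ _).trans ?_
  rw [finrank_submodule, finrank_submodule]

lemma config_iff {F : Type} [Field F] (w : Fin 7 → Fin 4 → F) (hw : ∀ a, w a ≠ 0) :
    IsConfigReal F h2planes ∅ (fun a => mk F (w a) (hw a)) ↔
      ∀ a b c d : Fin 7, a ≠ b → a ≠ c → a ≠ d → b ≠ c → b ≠ d → c ≠ d →
      (d4 (w a) (w b) (w c) (w d) = 0 ↔
        ∃ h ∈ h2planes, ({a, b, c, d} : Finset (Fin 7)) ⊆ h) := by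
  simp only [IsConfigReal, cop_iff, det_eq_d4]
  refine ⟨fun h => h.2.2, fun h => ?_⟩
  have hc : ∀ a b c : Fin 7, a ≠ b → a ≠ c → b ≠ c →
      ¬ Collinear3 F (mk F (w a) (hw a)) (mk F (w b) (hw b)) (mk F (w c) (hw c)) := by
    intro a b c h1 h2 h3 hcol
    obtain ⟨d, h4, h5, h6, h7⟩ := ext_dec a b c h1 h2 h3
    apply h7
    rw [← h a b c d h1 h2 h4 h3 h5 h6, ← det_eq_d4,
      ← cop_iff (w a) (w b) (w c) (w d) (hw a) (hw b) (hw c) (hw d)]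
    rw [Coplanar4]
    refine (Submodule.finrank_add_le_finrank_add_finrank _ _).trans ?_
    rw [finrank_submodule]
    rw [Collinear3] at hcol
    omega
  refine ⟨?_, ?_, h⟩
  · intro a b hab
    by_contra hne
    obtain ⟨c, h1, h2⟩ := ext3_dec a b hne
    apply hc a b c hne h1 h2
    dsimp only at hab
    rw [hab, Collinear3, sup_idem]
    refine (Submodule.finrank_add_le_finrank_add_finrank _ _).trans ?_
    rw [finrank_submodule, finrank_submodule]
  · intro a b c h1 h2 h3
    simpa using hc a b c h1 h2 h3

/-- Fano vectors over `F`. -/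
def vFF (F : Type) [Field F] (a : Fin 7) (i : Fin 3) : F := (vF a i : F)

/-- Dual Fano vectors over `F`. -/
def vHF (F : Type) [Field F] (a : Fin 7) (i : Fin 4) : F := (vH a i : F)

lemma cast_zero_iff {F : Type} [Field F] (h2 : (2 : F) = 0) (m : ℤ) :
    (m : F) = 0 ↔ (2 : ℤ) ∣ m := by
  rcases Int.even_or_odd' m with ⟨k, rfl | rfl⟩
  · simp [h2]
  · simp only [Int.cast_add, Int.cast_mul, Int.cast_ofNat, h2, zero_mul, Int.cast_one, zero_add,
      one_ne_zero, false_iff]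
    omega

lemma d3_cast {F : Type} [Field F] (a b c : Fin 7) :
    d3 (vFF F a) (vFF F b) (vFF F c) = ((d3 (vF a) (vF b) (vF c) : ℤ) : F) := by
  simp [d3, vFF]

lemma d4_cast {F : Type} [Field F] (a b c d : Fin 7) :
    d4 (vHF F a) (vHF F b) (vHF F c) (vHF F d) =
      ((d4 (vH a) (vH b) (vH c) (vH d) : ℤ) : F) := by
  simp [d4, vHF]

lemma vFF_ne {F : Type} [Field F] (a : Fin 7) : vFF F a ≠ 0 := by
  intro h
  have := fun i => congrFun h i
  simp only [Fin.forall_fin_succ] at this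
  fin_cases a <;> simp [vFF, vF] at this

lemma vHF_ne {F : Type} [Field F] (a : Fin 7) : vHF F a ≠ 0 := by
  intro h
  have := fun i => congrFun h i
  simp only [Fin.forall_fin_succ] at this
  fin_cases a <;> simp [vHF, vH] at this

lemma gl_ne {F : Type} [Field F] {n : ℕ} (g : GL (Fin n) F) (v : Fin n → F) (hv : v ≠ 0) :
    g.val *ᵥ v ≠ 0 := by
  intro h
  apply hv
  have : g⁻¹.val *ᵥ (g.val *ᵥ v) = v := by
    rw [mulVec_mulVec, ← Units.val_mul, inv_mul_cancel, Units.val_one, one_mulVec]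
  rw [← this, h, mulVec_zero]

lemma gl_det_ne {F : Type} [Field F] {n : ℕ} (g : GL (Fin n) F) : g.val.det ≠ 0 :=
  ((Matrix.isUnit_iff_isUnit_det _).1 g.isUnit).ne_zero

lemma fano_h1 {F : Type} [Field F] (h2 : (2 : F) = 0) (g : GL (Fin 3) F) :
    IsFanoReal F (fun a => mk F (g.val *ᵥ vFF F a) (gl_ne g _ (vFF_ne a))) := by
  rw [fano_iff]
  intro a b c h1 h3 h4
  rw [d3_mul, mul_eq_zero, or_iff_left (gl_det_ne g), d3_cast, cast_zero_iff h2]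
  exact vF_dec a b c h1 h3 h4

lemma config_h1 {F : Type} [Field F] (h2 : (2 : F) = 0) (g : GL (Fin 4) F) :
    IsConfigReal F h2planes ∅ (fun a => mk F (g.val *ᵥ vHF F a) (gl_ne g _ (vHF_ne a))) := by
  rw [config_iff]
  intro a b c d h1 h3 h4 h5 h6 h7
  rw [d4_mul, mul_eq_zero, or_iff_left (gl_det_ne g), d4_cast, cast_zero_iff h2]
  exact vH_dec a b c d h1 h3 h4 h5 h6 h7

lemma fano_h3 {F : Type} [Field F] (g : Matrix (Fin 3) (Fin 3) F)
    (h : ∀ a, ∃ c : F, g *ᵥ vFF F a = c • vFF F a) :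
    ∃ c : F, g = c • (1 : Matrix (Fin 3) (Fin 3) F) := by
  choose c hc using h
  have H := fun a i => congrFun (hc a) i
  simp only [Fin.forall_fin_succ] at H
  simp [vFF, vF, mulVec, dotProduct, Fin.sum_univ_succ] at H
  refine ⟨c 6, ?_⟩
  ext i j
  fin_cases i <;> fin_cases j <;> simp <;> grind

lemma config_h3 {F : Type} [Field F] (g : Matrix (Fin 4) (Fin 4) F)
    (h : ∀ a, ∃ c : F, g *ᵥ vHF F a = c • vHF F a) :
    ∃ c : F, g = c • (1 : Matrix (Fin 4) (Fin 4) F) := by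
  choose c hc using h
  have H := fun a i => congrFun (hc a) i
  simp only [Fin.forall_fin_succ] at H
  simp [vHF, vH, mulVec, dotProduct, Fin.sum_univ_succ] at H
  refine ⟨c 0, ?_⟩
  ext i j
  fin_cases i <;> fin_cases j <;> simp <;> grind

lemma fano_core {F : Type} [Field F] (w : Fin 7 → Fin 3 → F)
    (h0 : w 0 = ![1, 0, 0]) (h1 : w 1 = ![0, 1, 0]) (h3 : w 3 = ![0, 0, 1])
    (hw : ∀ a b c : Fin 7, a ≠ b → a ≠ c → b ≠ c →
      (d3 (w a) (w b) (w c) = 0 ↔ ({a, b, c} : Finset (Fin 7)) ∈ fanoLines)) :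
    (2 : F) = 0 ∧ ∃ x : Fin 3 → F, (∀ i, x i ≠ 0) ∧
      ∀ a, ∃ c : F, c ≠ 0 ∧ x * vFF F a = c • w a := by
  have z1 := (hw 0 1 2 (by decide) (by decide) (by decide)).2 (by decide)
  have z2 := (hw 2 3 6 (by decide) (by decide) (by decide)).2 (by decide)
  have z3 := (hw 0 3 4 (by decide) (by decide) (by decide)).2 (by decide)
  have z4 := (hw 1 4 6 (by decide) (by decide) (by decide)).2 (by decide)
  have z5 := (hw 1 3 5 (by decide) (by decide) (by decide)).2 (by decide)
  have z6 := (hw 0 5 6 (by decide) (by decide) (by decide)).2 (by decide)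
  have z7 := (hw 2 4 5 (by decide) (by decide) (by decide)).2 (by decide)
  have n1 := mt (hw 1 3 2 (by decide) (by decide) (by decide)).1 (by decide)
  have n2 := mt (hw 0 3 2 (by decide) (by decide) (by decide)).1 (by decide)
  have n3 := mt (hw 1 3 4 (by decide) (by decide) (by decide)).1 (by decide)
  have n4 := mt (hw 0 1 4 (by decide) (by decide) (by decide)).1 (by decide)
  have n5 := mt (hw 0 3 5 (by decide) (by decide) (by decide)).1 (by decide)
  have n6 := mt (hw 0 1 5 (by decide) (by decide) (by decide)).1 (by decide)
  have n7 := mt (hw 1 3 6 (by decide) (by decide) (by decide)).1 (by decide)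
  have n8 := mt (hw 0 3 6 (by decide) (by decide) (by decide)).1 (by decide)
  have n9 := mt (hw 0 1 6 (by decide) (by decide) (by decide)).1 (by decide)
  simp [d3, h0, h1, h3] at z1 z3 z5 n1 n2 n3 n4 n5 n6 n7 n8 n9
  simp [d3, h0, h1, h3, z1, z3, z5] at z2 z4 z6 z7
  refine ⟨?_, w 6, ?_, ?_⟩
  · clear hw
    grind
  · simp [Fin.forall_fin_succ, *]
  · simp only [Fin.forall_fin_succ, funext_iff]
    refine ⟨⟨w 6 0, n7, ?_⟩, ⟨w 6 1, n8, ?_⟩, ⟨w 6 0 / w 2 0, div_ne_zero n7 n1, ?_⟩,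
      ⟨w 6 2, n9, ?_⟩, ⟨w 6 0 / w 4 0, div_ne_zero n7 n3, ?_⟩,
      ⟨w 6 1 / w 5 1, div_ne_zero n8 n5, ?_⟩, ⟨1, one_ne_zero, ?_⟩, ?_⟩
    · simp [vFF, vF, h0]
    · simp [vFF, vF, h1]
    · simp [vFF, vF, z1]; clear hw; grind
    · simp [vFF, vF, h3]
    · simp [vFF, vF, z3]; clear hw; grind
    · simp [vFF, vF, z5]; clear hw; grind
    · simp [vFF, vF]
    · simp

lemma config_core {F : Type} [Field F] (w : Fin 7 → Fin 4 → F)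
    (h3 : w 3 = ![1, 0, 0, 0]) (h4 : w 4 = ![0, 1, 0, 0]) (h5 : w 5 = ![0, 0, 1, 0])
    (h6 : w 6 = ![0, 0, 0, 1])
    (hw : ∀ a b c d : Fin 7, a ≠ b → a ≠ c → a ≠ d → b ≠ c → b ≠ d → c ≠ d →
      (d4 (w a) (w b) (w c) (w d) = 0 ↔
        ∃ h ∈ h2planes, ({a, b, c, d} : Finset (Fin 7)) ⊆ h)) :
    (2 : F) = 0 ∧ ∃ x : Fin 4 → F, (∀ i, x i ≠ 0) ∧
      ∀ a, ∃ c : F, c ≠ 0 ∧ x * vHF F a = c • w a := by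
  have Z : ∀ a b c d : Fin 7, a ≠ b ∧ a ≠ c ∧ a ≠ d ∧ b ≠ c ∧ b ≠ d ∧ c ≠ d ∧
      (∃ h ∈ h2planes, ({a, b, c, d} : Finset (Fin 7)) ⊆ h) →
      d4 (w a) (w b) (w c) (w d) = 0 := fun a b c d ⟨i1, i2, i3, i4, i5, i6, i7⟩ =>
    (hw a b c d i1 i2 i3 i4 i5 i6).2 i7
  have N : ∀ a b c d : Fin 7, a ≠ b ∧ a ≠ c ∧ a ≠ d ∧ b ≠ c ∧ b ≠ d ∧ c ≠ d ∧
      (¬ ∃ h ∈ h2planes, ({a, b, c, d} : Finset (Fin 7)) ⊆ h) →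
      d4 (w a) (w b) (w c) (w d) ≠ 0 := fun a b c d ⟨i1, i2, i3, i4, i5, i6, i7⟩ =>
    mt (hw a b c d i1 i2 i3 i4 i5 i6).1 i7
  have z1 := Z 0 3 5 6 (by decide)
  have z2 := Z 1 3 4 6 (by decide)
  have z3 := Z 2 3 4 5 (by decide)
  have z4 := Z 0 1 4 5 (by decide)
  have z5 := Z 0 2 4 6 (by decide)
  have z6 := Z 1 2 5 6 (by decide)
  have z7 := Z 0 1 2 3 (by decide)
  have n1 := N 0 4 5 6 (by decide)
  have n2 := N 0 3 4 6 (by decide)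
  have n3 := N 0 3 4 5 (by decide)
  have n4 := N 1 4 5 6 (by decide)
  have n5 := N 1 3 5 6 (by decide)
  have n6 := N 1 3 4 5 (by decide)
  have n7 := N 2 4 5 6 (by decide)
  have n8 := N 2 3 5 6 (by decide)
  have n9 := N 2 3 4 6 (by decide)
  clear Z N hw
  simp [d4, h3, h4, h5, h6] at z1 z2 z3 n1 n2 n3 n4 n5 n6 n7 n8 n9
  simp [d4, h3, h4, h5, h6, z1, z2, z3] at z4 z5 z6 z7
  refine ⟨?_, ![w 0 0, w 1 1 * w 0 0 / w 1 0, w 0 2, w 0 3], ?_, ?_⟩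
  · grind
  · simp [Fin.forall_fin_succ, *]
  · simp only [Fin.forall_fin_succ, funext_iff]
    refine ⟨⟨1, one_ne_zero, ?_⟩, ⟨w 0 0 / w 1 0, div_ne_zero n1 n4, ?_⟩,
      ⟨w 0 0 / w 2 0, div_ne_zero n1 n7, ?_⟩, ⟨w 0 0, n1, ?_⟩,
      ⟨w 1 1 * w 0 0 / w 1 0, div_ne_zero (mul_ne_zero n5 n1) n4, ?_⟩,
      ⟨w 0 2, n2, ?_⟩, ⟨w 0 3, n3, ?_⟩, ?_⟩
    · simp [vHF, vH, z1]
    · simp [vHF, vH, z2]; grind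
    · simp [vHF, vH, z3]; grind
    · simp [vHF, vH, h3]
    · simp [vHF, vH, h4]
    · simp [vHF, vH, h5]
    · simp [vHF, vH, h6]
    · simp


lemma fano_h2 {F : Type} [Field F] (σ : Fin 7 → ℙ F (Fin 3 → F)) (hσ : IsFanoReal F σ) :
    (2 : F) = 0 ∧ ∃ g : GL (Fin 3) F, ∀ a,
      σ a = mk F (g.val *ᵥ vFF F a) (gl_ne g _ (vFF_ne a)) := by
  have e : σ = fun a => mk F (σ a).rep (σ a).rep_nonzero := by
    funext a; rw [mk_rep]
  rw [e, fano_iff] at hσ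
  set u : Fin 7 → Fin 3 → F := fun a => (σ a).rep with hu
  let m := (Matrix.of ![u 0, u 1, u 3])ᵀ
  have hm : m.det ≠ 0 := by
    rw [Matrix.det_transpose, det_eq_d3]
    exact mt (hσ 0 1 3 (by decide) (by decide) (by decide)).1 (by decide)
  let g0 : GL (Fin 3) F := Matrix.GeneralLinearGroup.mkOfDetNeZero m hm
  have hg0 : g0.val = m := rfl
  let w : Fin 7 → Fin 3 → F := fun a => g0⁻¹.val *ᵥ u a
  have hwu : ∀ a, g0.val *ᵥ w a = u a := by
    intro a
    simp only [w]
    rw [mulVec_mulVec, ← Units.val_mul, mul_inv_cancel, Units.val_one, one_mulVec]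
  have hinv : ∀ x, g0⁻¹.val *ᵥ (m *ᵥ x) = x := by
    intro x
    rw [← hg0, mulVec_mulVec, ← Units.val_mul, inv_mul_cancel, Units.val_one, one_mulVec]
  have h0 : w 0 = ![1, 0, 0] := by
    rw [← hinv ![1, 0, 0]]
    simp only [w]
    congr 1
    ext i
    simp [m, mulVec, dotProduct, Fin.sum_univ_succ]
  have h1 : w 1 = ![0, 1, 0] := by
    rw [← hinv ![0, 1, 0]]
    simp only [w]
    congr 1
    ext i
    simp [m, mulVec, dotProduct, Fin.sum_univ_succ]
  have h3 : w 3 = ![0, 0, 1] := by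
    rw [← hinv ![0, 0, 1]]
    simp only [w]
    congr 1
    ext i
    simp [m, mulVec, dotProduct, Fin.sum_univ_succ]
  obtain ⟨htwo, x, hx, hxa⟩ := fano_core w h0 h1 h3 (by
    intro a b c i1 i2 i3
    rw [← hσ a b c i1 i2 i3]
    simp only [w]
    rw [d3_mul, mul_eq_zero, or_iff_left (gl_det_ne _)])
  refine ⟨htwo, g0 * Matrix.GeneralLinearGroup.mkOfDetNeZero (Matrix.diagonal x)
    (by rw [det_diagonal]; exact Finset.prod_ne_zero_iff.2 fun i _ => hx i), fun a => ?_⟩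
  obtain ⟨c, hc0, hc⟩ := hxa a
  rw [e]
  dsimp only
  rw [mk_eq_mk_iff]
  refine ⟨(Units.mk0 c hc0)⁻¹, ?_⟩
  have h5 : Matrix.diagonal x *ᵥ vFF F a = c • w a := by
    rw [← hc]; ext i; rw [mulVec_diagonal]; rfl
  rw [Units.val_mul, ← mulVec_mulVec]
  change (Units.mk0 c hc0)⁻¹ • g0.val *ᵥ (Matrix.diagonal x *ᵥ vFF F a) = u a
  rw [h5, mulVec_smul, hwu, Units.smul_def, smul_smul]
  simp [hc0]

lemma config_h2 {F : Type} [Field F] (σ : Fin 7 → ℙ F (Fin 4 → F)) (hσ : IsConfigReal F h2planes ∅ σ) :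
    (2 : F) = 0 ∧ ∃ g : GL (Fin 4) F, ∀ a,
      σ a = mk F (g.val *ᵥ vHF F a) (gl_ne g _ (vHF_ne a)) := by
  have e : σ = fun a => mk F (σ a).rep (σ a).rep_nonzero := by
    funext a; rw [mk_rep]
  rw [e, config_iff] at hσ
  set u : Fin 7 → Fin 4 → F := fun a => (σ a).rep with hu
  let m := (Matrix.of ![u 3, u 4, u 5, u 6])ᵀ
  have hm : m.det ≠ 0 := by
    rw [Matrix.det_transpose, det_eq_d4]
    exact mt (hσ 3 4 5 6 (by decide) (by decide) (by decide) (by decide) (by decide) (by decide)).1 (by decide)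
  let g0 : GL (Fin 4) F := Matrix.GeneralLinearGroup.mkOfDetNeZero m hm
  have hg0 : g0.val = m := rfl
  let w : Fin 7 → Fin 4 → F := fun a => g0⁻¹.val *ᵥ u a
  have hwu : ∀ a, g0.val *ᵥ w a = u a := by
    intro a
    simp only [w]
    rw [mulVec_mulVec, ← Units.val_mul, mul_inv_cancel, Units.val_one, one_mulVec]
  have hinv : ∀ x, g0⁻¹.val *ᵥ (m *ᵥ x) = x := by
    intro x
    rw [← hg0, mulVec_mulVec, ← Units.val_mul, inv_mul_cancel, Units.val_one, one_mulVec]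
  have h3 : w 3 = ![1, 0, 0, 0] := by
    rw [← hinv ![1, 0, 0, 0]]
    simp only [w]
    congr 1
    ext i
    simp [m, mulVec, dotProduct, Fin.sum_univ_succ]
  have h4 : w 4 = ![0, 1, 0, 0] := by
    rw [← hinv ![0, 1, 0, 0]]
    simp only [w]
    congr 1
    ext i
    simp [m, mulVec, dotProduct, Fin.sum_univ_succ]
  have h5 : w 5 = ![0, 0, 1, 0] := by
    rw [← hinv ![0, 0, 1, 0]]
    simp only [w]
    congr 1
    ext i
    simp [m, mulVec, dotProduct, Fin.sum_univ_succ]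
  have h6 : w 6 = ![0, 0, 0, 1] := by
    rw [← hinv ![0, 0, 0, 1]]
    simp only [w]
    congr 1
    ext i
    simp [m, mulVec, dotProduct, Fin.sum_univ_succ]
  obtain ⟨htwo, x, hx, hxa⟩ := config_core w h3 h4 h5 h6 (by
    intro a b c d i1 i2 i3 i4 i5 i6
    rw [← hσ a b c d i1 i2 i3 i4 i5 i6]
    simp only [w]
    rw [d4_mul, mul_eq_zero, or_iff_left (gl_det_ne _)])
  refine ⟨htwo, g0 * Matrix.GeneralLinearGroup.mkOfDetNeZero (Matrix.diagonal x)
    (by rw [det_diagonal]; exact Finset.prod_ne_zero_iff.2 fun i _ => hx i), fun a => ?_⟩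
  obtain ⟨c, hc0, hc⟩ := hxa a
  rw [e]
  dsimp only
  rw [mk_eq_mk_iff]
  refine ⟨(Units.mk0 c hc0)⁻¹, ?_⟩
  have h7 : Matrix.diagonal x *ᵥ vHF F a = c • w a := by
    rw [← hc]; ext i; rw [mulVec_diagonal]; rfl
  rw [Units.val_mul, ← mulVec_mulVec]
  change (Units.mk0 c hc0)⁻¹ • g0.val *ᵥ (Matrix.diagonal x *ᵥ vHF F a) = u a
  rw [h7, mulVec_smul, hwu, Units.smul_def, smul_smul]
  simp [hc0]

/-- `A_{h₂}(4,q) · |PGL₃(F_q)| = F(q) · |PGL₄(F_q)|`, relating strong realizations of the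
complement of the Fano plane in `ℙ³(F_q)` to strong realizations of the Fano plane in
`ℙ²(F_q)`. -/
theorem Ah2_vs_fano (F : Type) [Field F] [Fintype F] (q : ℕ) (hq : q = Fintype.card F) :
    Nat.card {σ : Fin 7 → ℙ F (Fin 4 → F) // IsConfigReal F h2planes ∅ σ} *
        (Nat.card (GL (Fin 3) F) / (q - 1)) =
      Nat.card {τ : Fin 7 → ℙ F (Fin 3 → F) // IsFanoReal F τ} *
        (Nat.card (GL (Fin 4) F) / (q - 1)) := by
  subst hq
  by_cases h2 : (2 : F) = 0
  · have e4 := count_aux (vHF F) (IsConfigReal F h2planes ∅) (fun g a => gl_ne g _ (vHF_ne a))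
      (config_h1 h2) (fun σ hσ => (config_h2 σ hσ).2) config_h3
    have e3 := count_aux (vFF F) (IsFanoReal F) (fun g a => gl_ne g _ (vFF_ne a))
      (fano_h1 h2) (fun σ hσ => (fano_h2 σ hσ).2) fano_h3
    have hq : 0 < Fintype.card F - 1 := by
      have := Fintype.one_lt_card (α := F)
      omega
    rw [← e3, ← e4, Nat.mul_div_cancel _ hq, Nat.mul_div_cancel _ hq, mul_comm]
  · have i4 : IsEmpty {σ : Fin 7 → ℙ F (Fin 4 → F) // IsConfigReal F h2planes ∅ σ} :=
      ⟨fun σ => h2 (config_h2 σ.1 σ.2).1⟩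
    have i3 : IsEmpty {τ : Fin 7 → ℙ F (Fin 3 → F) // IsFanoReal F τ} :=
      ⟨fun σ => h2 (fano_h2 σ.1 σ.2).1⟩
    rw [Nat.card_of_isEmpty, zero_mul, Nat.card_of_isEmpty, zero_mul]
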